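/- Let (p_k)_{k≥0} be a critical offspring distribution with p_1 < 1, pgf Φ, and tree-size probabilities (q_n). Then for every real α < 0 and every real t > 1: ∑_{n≥1} q_n (n−1+t)^α = (t−1)^α ∫_0^1 [1 − Γ(−α)^{-1} ∫_{(t−1)·log(Φ(η)/η)}^{∞} v^{−α−1} e^{−v} dv] dη. -/

import Mathlib

open MeasureTheory

/-!
Let `V` be gamma distributed with shape `a = -α` and rate `r = t - 1`. As
`E[exp (-n V)] = (r / (n + r)) ^ a`, the sum of the theorem is `r ^ (-a) * E[y (exp (-V))]`, where
`y` is the generating function of `q`. By the layer cake formula this expectation is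
`∫ η in 0..y 1, P (η ≤ y (exp (-V)))`. The equation `y z = z * Φ (y z)` inverts `y`: for `η > 0`,
`η ≤ y z` if and only if `η / Φ η ≤ z`. So the probability is that of `V ≤ log (Φ η / η)`, which is
one minus a normalized upper incomplete gamma function.
-/

open Set Real ProbabilityTheory

/-- The generating function `z ↦ ∑ qₙ zⁿ` of a sequence, as a real function; its value is `0` where
the series diverges. -/
noncomputable def genFun (q : ℕ → ℝ) (z : ℝ) : ℝ := ∑' n, q n * z ^ n

/-- The upper incomplete gamma function `Γ(a, x)`, for real arguments; its value is `0` where the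
integral diverges. -/
noncomputable def upperGamma (a x : ℝ) : ℝ := ∫ v in Ioi x, v ^ (a - 1) * exp (-v)

theorem exp_neg_mem_Icc {v : ℝ} (hv : 0 ≤ v) : exp (-v) ∈ Icc (0 : ℝ) 1 :=
  ⟨exp_nonneg _, exp_le_one_iff.2 (neg_nonpos.2 hv)⟩

theorem genFun_one (q : ℕ → ℝ) : genFun q 1 = ∑' n, q n := by
  simp only [genFun, one_pow, mul_one]

section GenFun

variable {q : ℕ → ℝ}

theorem summable_mul_pow_of_mem_Icc (hq : ∀ n, 0 ≤ q n) (hs : Summable q) {z : ℝ}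
    (hz : z ∈ Icc (0 : ℝ) 1) : Summable fun n => q n * z ^ n :=
  hs.of_nonneg_of_le (fun n => mul_nonneg (hq n) (pow_nonneg hz.1 n))
    fun n => mul_le_of_le_one_right (hq n) (pow_le_one₀ hz.1 hz.2)

theorem continuousOn_genFun (hs : Summable q) : ContinuousOn (genFun q) (Icc 0 1) := by
  refine continuousOn_tsum (fun n => by fun_prop) hs.norm fun n z hz => ?_
  rw [norm_mul, norm_pow, norm_of_nonneg hz.1]
  exact mul_le_of_le_one_right (norm_nonneg _) (pow_le_one₀ hz.1 hz.2)

theorem monotoneOn_genFun (hq : ∀ n, 0 ≤ q n) (hs : Summable q) :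
    MonotoneOn (genFun q) (Icc 0 1) := fun _ hz _ hw hzw =>
  (summable_mul_pow_of_mem_Icc hq hs hz).tsum_le_tsum
    (fun n => mul_le_mul_of_nonneg_left (pow_le_pow_left₀ hz.1 hzw n) (hq n))
    (summable_mul_pow_of_mem_Icc hq hs hw)

end GenFun

section Gamma

variable {a r : ℝ}

theorem upperGamma_mul (hr : 0 < r) {x : ℝ} (hx : 0 ≤ x) :
    upperGamma a (r * x) = r ^ a * ∫ v in Ioi x, v ^ (a - 1) * exp (-(r * v)) := by
  have hsubst := integral_comp_mul_left_Ioi (fun v : ℝ => v ^ (a - 1) * exp (-v)) x hr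
  rw [smul_eq_mul, eq_inv_mul_iff_mul_eq₀ hr.ne'] at hsubst
  rw [upperGamma, ← hsubst, ← integral_const_mul, ← integral_const_mul]
  refine setIntegral_congr_fun measurableSet_Ioi fun v hv => ?_
  have hpow : r * r ^ (a - 1) = r ^ a := by rw [mul_comm, ← rpow_add_one hr.ne', sub_add_cancel]
  simp only [mul_rpow hr.le (hx.trans (le_of_lt hv)), ← hpow]
  ring

theorem measurable_gammaPDF (a r : ℝ) : Measurable (gammaPDF a r) :=
  (measurable_gammaPDFReal a r).ennreal_ofReal

theorem ae_pos_gammaMeasure (a r : ℝ) : ∀ᵐ v ∂gammaMeasure a r, 0 < v := by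
  have hae : ∀ᵐ v : ℝ, v ≠ 0 := by simp [ae_iff]
  rw [gammaMeasure, ae_withDensity_iff (measurable_gammaPDF a r)]
  filter_upwards [hae] with v hv hpdf
  exact hv.symm.lt_of_le (not_lt.1 fun hneg => hpdf (gammaPDF_of_neg hneg))

theorem setIntegral_Ioi_gammaMeasure (ha : 0 < a) (hr : 0 < r) {x : ℝ} (hx : 0 ≤ x) (f : ℝ → ℝ) :
    ∫ v in Ioi x, f v ∂gammaMeasure a r =
      r ^ a * (Gamma a)⁻¹ * ∫ v in Ioi x, v ^ (a - 1) * exp (-(r * v)) * f v := by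
  rw [gammaMeasure, setIntegral_withDensity_eq_setIntegral_toReal_smul (measurable_gammaPDF a r)
    (.of_forall fun _ => ENNReal.ofReal_lt_top) _ measurableSet_Ioi,
    ← integral_const_mul]
  refine setIntegral_congr_fun measurableSet_Ioi fun v hv => ?_
  have hpdf : (gammaPDF a r v).toReal = r ^ a / Gamma a * v ^ (a - 1) * exp (-(r * v)) := by
    rw [gammaPDF, ENNReal.toReal_ofReal (gammaPDFReal_nonneg ha hr v), gammaPDFReal,
      if_pos (hx.trans (le_of_lt hv))]
  simp only [hpdf, smul_eq_mul]
  ring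

theorem integral_exp_neg_mul_gammaMeasure (ha : 0 < a) (hr : 0 < r) {s : ℝ} (hs : 0 < s + r) :
    ∫ v, exp (-(s * v)) ∂gammaMeasure a r = r ^ a * (s + r) ^ (-a) := by
  have hexp : ∀ v : ℝ, v ^ (a - 1) * exp (-(r * v)) * exp (-(s * v)) =
      v ^ (a - 1) * exp (-((s + r) * v)) := fun v => by
    rw [mul_assoc, ← exp_add]
    ring_nf
  have hpos : ∀ᵐ v ∂gammaMeasure a r, v ∈ Ioi 0 := ae_pos_gammaMeasure a r
  rw [← Measure.restrict_eq_self_of_ae_mem hpos, setIntegral_Ioi_gammaMeasure ha hr le_rfl]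
  simp only [hexp]
  rw [integral_rpow_mul_exp_neg_mul_Ioi ha hs, one_div, inv_rpow hs.le, ← rpow_neg hs.le]
  field_simp [(Gamma_pos_of_pos ha).ne']

theorem gammaMeasure_real_Iic (ha : 0 < a) (hr : 0 < r) {x : ℝ} (hx : 0 ≤ x) :
    (gammaMeasure a r).real (Iic x) = 1 - (Gamma a)⁻¹ * upperGamma a (r * x) := by
  have := isProbabilityMeasure_gammaMeasure ha hr
  have htail := setIntegral_Ioi_gammaMeasure ha hr hx fun _ => 1
  simp only [setIntegral_const, smul_eq_mul, mul_one] at htail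
  rw [← compl_Ioi, probReal_compl_eq_one_sub measurableSet_Ioi, htail, upperGamma_mul hr hx]
  ring

theorem integral_genFun_exp_neg_gammaMeasure (ha : 0 < a) (hr : 0 < r) {q : ℕ → ℝ}
    (hs : Summable q) :
    ∫ v, genFun q (exp (-v)) ∂gammaMeasure a r = r ^ a * ∑' n : ℕ, q n * (n + r) ^ (-a) := by
  have := isProbabilityMeasure_gammaMeasure ha hr
  have hbound (n : ℕ) : ∀ᵐ v ∂gammaMeasure a r, ‖q n * exp (-v) ^ n‖ ≤ ‖q n‖ := by
    filter_upwards [ae_pos_gammaMeasure a r] with v hv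
    obtain ⟨h0, h1⟩ := exp_neg_mem_Icc hv.le
    rw [norm_mul, norm_of_nonneg (pow_nonneg h0 n)]
    exact mul_le_of_le_one_right (norm_nonneg _) (pow_le_one₀ h0 h1)
  have hint (n : ℕ) : Integrable (fun v => q n * exp (-v) ^ n) (gammaMeasure a r) :=
    .of_bound (by fun_prop) _ (hbound n)
  have hsum : Summable fun n => ∫ v, ‖q n * exp (-v) ^ n‖ ∂gammaMeasure a r :=
    hs.norm.of_nonneg_of_le (fun n => integral_nonneg fun v => norm_nonneg _) fun n => by
      simpa using integral_mono_ae (hint n).norm (integrable_const _) (hbound n)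
  have hterm (n : ℕ) : ∫ v, q n * exp (-v) ^ n ∂gammaMeasure a r =
      r ^ a * (q n * (n + r) ^ (-a)) := by
    simp only [← exp_nat_mul, mul_neg]
    rw [integral_const_mul, integral_exp_neg_mul_gammaMeasure ha hr (by positivity)]
    ring
  simp only [genFun]
  rw [← integral_tsum_of_summable_integral_norm hint hsum, ← tsum_mul_left]
  exact tsum_congr hterm

end Gamma

section FixedPoint

variable {y Φ : ℝ → ℝ}

theorem div_mem_Ioc_and_apply_div_eq (hcont : ContinuousOn y (Icc 0 1))
    (hfix : ∀ z ∈ Icc (0 : ℝ) 1, y z = z * Φ (y z)) {η : ℝ} (hη : η ∈ Ioc 0 (y 1)) :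
    η / Φ η ∈ Ioc 0 1 ∧ y (η / Φ η) = η := by
  have hy0 : y 0 = 0 := by simpa using hfix 0 (left_mem_Icc.2 zero_le_one)
  obtain ⟨z, hz, rfl⟩ : η ∈ y '' Icc 0 1 :=
    intermediate_value_Icc zero_le_one hcont (by rw [hy0]; exact Ioc_subset_Icc_self hη)
  have hprod : z * Φ (y z) ≠ 0 := hfix z hz ▸ hη.1.ne'
  have hdiv : y z / Φ (y z) = z := by
    rw [div_eq_iff (right_ne_zero_of_mul hprod), ← hfix z hz]
  rw [hdiv]
  exact ⟨⟨hz.1.lt_of_ne' (left_ne_zero_of_mul hprod), hz.2⟩, rfl⟩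

theorem le_iff_div_le_of_eq_mul_comp (hmono : MonotoneOn y (Icc 0 1))
    (hcont : ContinuousOn y (Icc 0 1)) (hfix : ∀ z ∈ Icc (0 : ℝ) 1, y z = z * Φ (y z))
    {η : ℝ} (hη : η ∈ Ioc 0 (y 1)) {w : ℝ} (hw : w ∈ Icc (0 : ℝ) 1) :
    η ≤ y w ↔ η / Φ η ≤ w := by
  obtain ⟨hz, hyz⟩ := div_mem_Ioc_and_apply_div_eq hcont hfix hη
  have hz' := Ioc_subset_Icc_self hz
  refine ⟨fun hle => ?_, fun hle => hyz.ge.trans (hmono hz' hw hle)⟩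
  by_contra! hlt
  have hyw : y w = η := ((hmono hw hz' hlt.le).trans_eq hyz).antisymm hle
  have hw_mul : η = w * Φ η := hyw ▸ hfix w hw
  have hΦ : Φ η ≠ 0 := right_ne_zero_of_mul (hw_mul ▸ hη.1.ne')
  exact hlt.ne (eq_div_of_mul_eq hΦ hw_mul.symm)

theorem gammaMeasure_real_le_comp_exp_neg (hmono : MonotoneOn y (Icc 0 1))
    (hcont : ContinuousOn y (Icc 0 1)) (hfix : ∀ z ∈ Icc (0 : ℝ) 1, y z = z * Φ (y z))
    {a r : ℝ} (ha : 0 < a) (hr : 0 < r) {η : ℝ} (hη : η ∈ Ioc 0 (y 1)) :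
    (gammaMeasure a r).real {v | η ≤ y (exp (-v))} =
      1 - (Gamma a)⁻¹ * upperGamma a (r * log (Φ η / η)) := by
  obtain ⟨hpos, hle_one⟩ := (div_mem_Ioc_and_apply_div_eq hcont hfix hη).1
  have hlog : log (Φ η / η) = -log (η / Φ η) := by rw [← log_inv, inv_div]
  have hlog_nonneg : 0 ≤ log (Φ η / η) := hlog ▸ neg_nonneg.2 (log_nonpos hpos.le hle_one)
  rw [← gammaMeasure_real_Iic ha hr hlog_nonneg]
  refine measureReal_congr ?_
  filter_upwards [ae_pos_gammaMeasure a r] with v hv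
  refine propext ?_
  change η ≤ y (exp (-v)) ↔ v ≤ log (Φ η / η)
  rw [le_iff_div_le_of_eq_mul_comp hmono hcont hfix hη (exp_neg_mem_Icc hv.le), hlog, le_neg,
    log_le_iff_le_exp hpos]

theorem integral_comp_exp_neg_gammaMeasure (hmono : MonotoneOn y (Icc 0 1))
    (hcont : ContinuousOn y (Icc 0 1)) (hfix : ∀ z ∈ Icc (0 : ℝ) 1, y z = z * Φ (y z))
    {a r : ℝ} (ha : 0 < a) (hr : 0 < r) :
    ∫ v, y (exp (-v)) ∂gammaMeasure a r =
      ∫ η in 0..y 1, (1 - (Gamma a)⁻¹ * upperGamma a (r * log (Φ η / η))) := by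
  have := isProbabilityMeasure_gammaMeasure ha hr
  have h0 : (0 : ℝ) ∈ Icc (0 : ℝ) 1 := left_mem_Icc.2 zero_le_one
  have h1 : (1 : ℝ) ∈ Icc (0 : ℝ) 1 := right_mem_Icc.2 zero_le_one
  have hy0 : y 0 = 0 := by simpa using hfix 0 h0
  have hnonneg : ∀ᵐ v ∂gammaMeasure a r, 0 ≤ y (exp (-v)) := by
    filter_upwards [ae_pos_gammaMeasure a r] with v hv
    exact hy0 ▸ hmono h0 (exp_neg_mem_Icc hv.le) (exp_nonneg _)
  have hbdd : ∀ᵐ v ∂gammaMeasure a r, y (exp (-v)) ≤ y 1 := by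
    filter_upwards [ae_pos_gammaMeasure a r] with v hv
    exact hmono (exp_neg_mem_Icc hv.le) h1 (exp_neg_mem_Icc hv.le).2
  have hmeas : AEStronglyMeasurable (fun v => y (exp (-v))) (gammaMeasure a r) := by
    have hpos : ∀ᵐ v ∂gammaMeasure a r, v ∈ Ioi 0 := ae_pos_gammaMeasure a r
    rw [← Measure.restrict_eq_self_of_ae_mem hpos]
    exact (hcont.comp (by fun_prop) fun v hv => exp_neg_mem_Icc (le_of_lt hv)).aestronglyMeasurable
      measurableSet_Ioi
  have hint : Integrable (fun v => y (exp (-v))) (gammaMeasure a r) :=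
    .of_mem_Icc 0 (y 1) hmeas.aemeasurable (hnonneg.and hbdd)
  rw [hint.integral_eq_integral_Ioc_meas_le hnonneg hbdd,
    intervalIntegral.integral_of_le (hy0 ▸ hmono h0 h1 zero_le_one)]
  exact setIntegral_congr_fun measurableSet_Ioc fun η hη =>
    gammaMeasure_real_le_comp_exp_neg hmono hcont hfix ha hr hη

end FixedPoint

theorem stmt14_general {q : ℕ → ℝ} (hq : ∀ n, 0 ≤ q n) (hs : Summable q) {Φ : ℝ → ℝ}
    (hfix : ∀ z ∈ Icc (0 : ℝ) 1, genFun q z = z * Φ (genFun q z))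
    {α : ℝ} (hα : α < 0) {t : ℝ} (ht : 1 < t) :
    ∑' n : ℕ, q n * ((n : ℝ) - 1 + t) ^ α =
      (t - 1) ^ α *
        ∫ η in 0..∑' n, q n,
          (1 - (Gamma (-α))⁻¹ * upperGamma (-α) ((t - 1) * log (Φ η / η))) := by
  have ha : 0 < -α := neg_pos.2 hα
  have hr : 0 < t - 1 := sub_pos.2 ht
  rw [← genFun_one q, ← integral_comp_exp_neg_gammaMeasure (monotoneOn_genFun hq hs)
    (continuousOn_genFun hs) hfix ha hr, integral_genFun_exp_neg_gammaMeasure ha hr hs,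
    ← mul_assoc, ← rpow_add hr, add_neg_cancel, rpow_zero, one_mul, neg_neg]
  exact tsum_congr fun n => by rw [add_sub_left_comm, add_comm]

/-- Theorem B.1 of the paper. For a critical offspring distribution with
`p 1 < 1`, pgf `Φ` and tree-size probabilities `q`, for every real `α < 0` and real `t > 1`:
`∑ q_n (n−1+t)^α = (t−1)^α ∫_0^1 [1 − Γ(−α)⁻¹ ∫_{(t−1)log(Φ(η)/η)}^∞ v^{−α−1}e^{−v} dv] dη`. -/
theorem stmt14
    (p : ℕ → ℝ) (hp : ∀ k, 0 ≤ p k)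
    (hpsum : ∑' k, p k = 1)
    (hcrit : ∑' k : ℕ, (k : ℝ) * p k = 1)
    (hp1 : p 1 < 1)
    (q : ℕ → ℝ) (hq0 : q 0 = 0) (hqnn : ∀ n, 0 ≤ q n)
    (hqsum : ∑' n, q n = 1)
    (hfix : ∀ z ∈ Set.Icc (0:ℝ) 1,
      (∑' n, q n * z ^ n) = z * ∑' k, p k * (∑' n, q n * z ^ n) ^ k)
    (α : ℝ) (hα : α < 0) (t : ℝ) (ht : 1 < t) :
    (∑' n : ℕ, q n * ((n : ℝ) - 1 + t) ^ α) =
      (t - 1) ^ α *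
        ∫ η in (0:ℝ)..1,
          (1 - (Real.Gamma (-α))⁻¹ *
            ∫ v in Set.Ioi ((t - 1) * Real.log ((∑' k, p k * η ^ k) / η)),
              v ^ (-α - 1) * Real.exp (-v)) := by
  have hs : Summable q := not_imp_comm.1 tsum_eq_zero_of_not_summable (hqsum ▸ one_ne_zero)
  simpa only [hqsum, upperGamma, genFun] using stmt14_general hqnn hs (Φ := genFun p) hfix hα ht
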